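/- arXiv:2402.18111 — 2 statements merged into one kernel-verified Lean document; each statement's English description precedes it below -/
import Mathlib

section
/- There exists an absolute constant C > 0 with the following property. Let w : Π → ℝ be measurable, N ≥ 0, I ≥ 0, and suppose |w(r̄, s̄)| ≤ N r̄ s̄ for almost every (r̄, s̄) ∈ Π and ∫∫_Π (r̄² + s̄²) |w(r̄, s̄)| dr̄ ds̄ = I < ∞. Then for every (r, s) ∈ Π, the integrals defining u^r[w](r, s) and u^s[w](r, s) converge absolutely and sup_{(r,s) ∈ Π} max{ |u^r[w](r, s)|, |u^s[w](r, s)| } ≤ C I^{1/2} N^{1/2}. -/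
open MeasureTheory Real

/-- `X₋₋ = (r−r̄)² + (s−s̄)² + 2rr̄(1−cos θ̄) + 2ss̄(1−cos φ̄)`. -/
noncomputable def Xmm (r s rb sb θ φ : ℝ) : ℝ :=
  (r - rb) ^ 2 + (s - sb) ^ 2 + 2 * r * rb * (1 - Real.cos θ) + 2 * s * sb * (1 - Real.cos φ)

/-- The Biot–Savart kernel `F^r` of the bi-rotational Euler flow. -/
noncomputable def Fr (r s rb sb : ℝ) : ℝ :=
  (2 / Real.pi ^ 2) * ∫ θ in (0:ℝ)..Real.pi, ∫ φ in (0:ℝ)..Real.pi,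
    rb * sb * Real.cos θ * (sb - s * Real.cos φ) / (Xmm r s rb sb θ φ) ^ 2

/-- `F^s(r,s,r̄,s̄) = F^r(s,r,s̄,r̄)`. -/
noncomputable def Fs (r s rb sb : ℝ) : ℝ := Fr s r sb rb

/-- The quadrant `Π = {(r,s) : r ≥ 0, s ≥ 0}`. -/
def quadrant : Set (ℝ × ℝ) := Set.Ici (0:ℝ) ×ˢ Set.Ici (0:ℝ)

/-- `u^r[w](r,s) = −∫∫_Π F^r(r,s,r̄,s̄) w(r̄,s̄) ds̄ dr̄`. -/
noncomputable def uR (w : ℝ × ℝ → ℝ) (r s : ℝ) : ℝ :=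
  -∫ p in quadrant, Fr r s p.1 p.2 * w p

/-- `u^s[w](r,s) = ∫∫_Π F^s(r,s,r̄,s̄) w(r̄,s̄) ds̄ dr̄`. -/
noncomputable def uS (w : ℝ × ℝ → ℝ) (r s : ℝ) : ℝ :=
  ∫ p in quadrant, Fs r s p.1 p.2 * w p

/-- The elementary bound `∫ k b (d + b t)^{-(k+1)} ≤ d^{-k}` over an interval starting at `0`. -/
lemma intervalIntegral_affine_pow_le {d b c : ℝ} (hd : 0 < d) (hb : 0 ≤ b) (hc : 0 ≤ c) (k : ℕ) :
    IntervalIntegrable (fun t => k * b / (d + b * t) ^ (k + 1)) volume 0 c ∧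
      ∫ t in (0:ℝ)..c, k * b / (d + b * t) ^ (k + 1) ≤ 1 / d ^ k := by
  have hpos : ∀ t ∈ Set.uIcc 0 c, 0 < d + b * t := by
    intro t ht
    rw [Set.uIcc_of_le hc] at ht
    have := mul_nonneg hb ht.1
    linarith
  have hint : IntervalIntegrable (fun t => k * b / (d + b * t) ^ (k + 1)) volume 0 c := by
    apply ContinuousOn.intervalIntegrable
    apply ContinuousOn.div (by fun_prop) (by fun_prop)
    intro t ht
    exact (pow_pos (hpos t ht) _).ne'
  refine ⟨hint, ?_⟩
  have hderiv : ∀ t ∈ Set.uIcc 0 c,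
      HasDerivAt (fun t => -((d + b * t) ^ k)⁻¹) (k * b / (d + b * t) ^ (k + 1)) t := by
    intro t ht
    have h0 := hpos t ht
    have h1 : HasDerivAt (fun t => d + b * t) b t := by
      simpa using ((hasDerivAt_id t).const_mul b).const_add d
    have h2 := ((h1.pow k).inv (pow_pos h0 k).ne').neg
    refine h2.congr_deriv ?_
    rcases k with _ | k
    · simp
    · simp only [Nat.add_sub_cancel, Pi.pow_apply]
      field_simp
      ring
  rw [intervalIntegral.integral_eq_sub_of_hasDerivAt hderiv hint]
  have := pow_pos (hpos c Set.right_mem_uIcc) k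
  have h3 : 0 ≤ ((d + b * c) ^ k)⁻¹ := by positivity
  simp only [mul_zero, add_zero, one_div]
  linarith

/-- Coercivity of `X₋₋` in all of its four directions. -/
lemma sq_le_Xmm {r s a b d θ φ : ℝ} (hr : 0 ≤ r) (hs : 0 ≤ s) (ha : 0 ≤ a) (hb : 0 ≤ b)
    (hd : d ^ 2 ≤ (r - a) ^ 2 + (s - b) ^ 2) (h1 : |r - a| ≤ d) (h2 : |s - b| ≤ d)
    (hθ : θ ∈ Set.Icc 0 π) (hφ : φ ∈ Set.Icc 0 π) :
    (d + a * θ + b * φ) ^ 2 ≤ 81 * Xmm r s a b θ φ := by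
  have coercive : ∀ {r a θ : ℝ}, 0 ≤ r → 0 ≤ a → |r - a| ≤ d → θ ∈ Set.Icc 0 π →
      2 / π ^ 2 * (a * θ) ^ 2 ≤ 2 * r * a * (1 - Real.cos θ) + 2 * d ^ 2 := by
    intro r a θ hr ha hra hθ
    have hcos := Real.cos_le_one_sub_mul_cos_sq (x := θ) (by rw [abs_of_nonneg hθ.1]; exact hθ.2)
    have hd0 : 0 ≤ d := (abs_nonneg _).trans hra
    have ha' : a ^ 2 ≤ 2 * (r * a) + d ^ 2 := by
      have := (abs_le.1 hra).1
      nlinarith [sq_nonneg (a - d)]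
    have hq : θ ^ 2 / π ^ 2 ≤ 1 := by
      rw [div_le_one (by positivity)]
      exact pow_le_pow_left₀ hθ.1 hθ.2 2
    have hq0 : 0 ≤ θ ^ 2 / π ^ 2 := by positivity
    have e1 : 2 / π ^ 2 * (a * θ) ^ 2 = 2 * a ^ 2 * (θ ^ 2 / π ^ 2) := by ring
    have e2 : 2 * (θ ^ 2 / π ^ 2) ≤ 1 - Real.cos θ := by
      have : 2 / π ^ 2 * θ ^ 2 = 2 * (θ ^ 2 / π ^ 2) := by ring
      linarith
    have h3 := mul_le_mul_of_nonneg_left e2 (mul_nonneg hr ha)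
    have h4 := mul_le_mul_of_nonneg_right ha' hq0
    have h5 := mul_le_mul_of_nonneg_left hq (sq_nonneg d)
    rw [e1]
    nlinarith
  have hA := coercive hr ha h1 hθ
  have hB := coercive hs hb h2 hφ
  have hpi : π ^ 2 ≤ 10 := by nlinarith [Real.pi_lt_d2, Real.pi_pos]
  have hpi' : 2 / 10 ≤ 2 / π ^ 2 := by gcongr
  have hA' : 2 / 10 * (a * θ) ^ 2 ≤ 2 / π ^ 2 * (a * θ) ^ 2 := by gcongr
  have hB' : 2 / 10 * (b * φ) ^ 2 ≤ 2 / π ^ 2 * (b * φ) ^ 2 := by gcongr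
  have hcA : 0 ≤ 2 * r * a * (1 - Real.cos θ) :=
    mul_nonneg (by positivity) (by linarith [Real.cos_le_one θ])
  have hcB : 0 ≤ 2 * s * b * (1 - Real.cos φ) :=
    mul_nonneg (by positivity) (by linarith [Real.cos_le_one φ])
  unfold Xmm
  nlinarith [sq_nonneg (d - a * θ), sq_nonneg (d - b * φ), sq_nonneg (a * θ - b * φ)]

lemma abs_integrand_le {r s a b d θ φ : ℝ} (hr : 0 ≤ r) (hs : 0 ≤ s) (ha : 0 ≤ a) (hb : 0 ≤ b)
    (hd0 : 0 < d)
    (hd : d ^ 2 ≤ (r - a) ^ 2 + (s - b) ^ 2) (h1 : |r - a| ≤ d) (h2 : |s - b| ≤ d)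
    (hθ : θ ∈ Set.Icc 0 π) (hφ : φ ∈ Set.Icc 0 π) :
    |a * b * Real.cos θ * (b - s * Real.cos φ) / (Xmm r s a b θ φ) ^ 2| ≤
      729 * (a * b) / (d + a * θ + b * φ) ^ 3 := by
  have hE : 0 < d + a * θ + b * φ := by
    have := mul_nonneg ha hθ.1
    have := mul_nonneg hb hφ.1
    linarith
  have hX := sq_le_Xmm hr hs ha hb hd h1 h2 hθ hφ
  set E := d + a * θ + b * φ
  have hv : (b - s * Real.cos φ) ^ 2 ≤ Xmm r s a b θ φ := by
    have hcA : 0 ≤ 2 * r * a * (1 - Real.cos θ) :=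
      mul_nonneg (by positivity) (by linarith [Real.cos_le_one θ])
    have hc : 0 ≤ 1 - Real.cos φ ^ 2 := by linarith [Real.cos_sq_le_one φ]
    have := mul_nonneg (sq_nonneg s) hc
    unfold Xmm
    nlinarith [sq_nonneg (r - a)]
  set X := Xmm r s a b θ φ
  have hX0 : 0 < X := by nlinarith [pow_pos hE 2]
  set y := √X with hy
  have hy0 : 0 < y := Real.sqrt_pos.2 hX0
  have hyX : y ^ 2 = X := Real.sq_sqrt hX0.le
  have hEy : E ≤ 9 * y := by
    apply le_of_sq_le_sq _ (by positivity)
    rw [mul_pow, hyX]; linarith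
  have hvy : |b - s * Real.cos φ| ≤ y := Real.abs_le_sqrt hv
  rw [abs_div, abs_mul, abs_mul, abs_of_nonneg (mul_nonneg ha hb), ← hyX,
    abs_of_nonneg (by positivity : (0:ℝ) ≤ (y ^ 2) ^ 2), div_le_div_iff₀ (by positivity)
    (by positivity)]
  have hE3 : E ^ 3 ≤ 729 * y ^ 3 := by
    calc E ^ 3 ≤ (9 * y) ^ 3 := by gcongr
      _ = _ := by ring
  calc a * b * |Real.cos θ| * |b - s * Real.cos φ| * E ^ 3
      ≤ a * b * 1 * y * (729 * y ^ 3) := by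
        gcongr
        exact Real.abs_cos_le_one θ
    _ = _ := by ring

/-- The kernel `F^r` is bounded by a multiple of the inverse distance. -/
lemma abs_Fr_le {r s a b d : ℝ} (hr : 0 ≤ r) (hs : 0 ≤ s) (ha : 0 ≤ a) (hb : 0 ≤ b)
    (hd0 : 0 < d)
    (hd : d ^ 2 ≤ (r - a) ^ 2 + (s - b) ^ 2) (h1 : |r - a| ≤ d) (h2 : |s - b| ≤ d) :
    |Fr r s a b| ≤ 365 / d := by
  have hpi := Real.pi_pos
  have inner : ∀ θ ∈ Set.Ioc 0 π,
      ‖∫ φ in (0:ℝ)..π, a * b * Real.cos θ * (b - s * Real.cos φ) / (Xmm r s a b θ φ) ^ 2‖ ≤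
        729 / 2 * ((1 : ℕ) * a / (d + a * θ) ^ (1 + 1)) := by
    intro θ hθ
    have hD : 0 < d + a * θ := by
      have := mul_nonneg ha hθ.1.le
      linarith
    obtain ⟨hint, hle⟩ := intervalIntegral_affine_pow_le hD hb hpi.le 2
    refine (intervalIntegral.norm_integral_le_of_norm_le
      (g := fun φ => 729 / 2 * a * ((2 : ℕ) * b / (d + a * θ + b * φ) ^ (2 + 1))) hpi.le
      (ae_of_all _ fun φ hφ => ?_) (hint.const_mul _)).trans ?_
    · rw [Real.norm_eq_abs]
      refine (abs_integrand_le hr hs ha hb hd0 hd h1 h2 ⟨hθ.1.le, hθ.2⟩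
        ⟨hφ.1.le, hφ.2⟩).trans (le_of_eq ?_)
      push_cast
      ring
    · rw [intervalIntegral.integral_const_mul]
      calc _ ≤ 729 / 2 * a * (1 / (d + a * θ) ^ 2) := by gcongr
        _ = _ := by push_cast; ring
  obtain ⟨hint, hle⟩ := intervalIntegral_affine_pow_le hd0 ha hpi.le 1
  have outer := intervalIntegral.norm_integral_le_of_norm_le hpi.le
    (ae_of_all _ inner) (hint.const_mul _)
  rw [intervalIntegral.integral_const_mul, Real.norm_eq_abs] at outer
  unfold Fr
  rw [abs_mul, abs_of_pos (by positivity : 0 < 2 / π ^ 2)]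
  have hc : 2 / π ^ 2 ≤ 1 := by
    rw [div_le_one (by positivity)]
    nlinarith [Real.pi_gt_three]
  calc _ ≤ 1 * (729 / 2 * (1 / d ^ 1)) := by
        gcongr
        exact outer.trans (by gcongr)
    _ ≤ 365 / d := by
        rw [pow_one, one_mul, mul_one_div]
        gcongr
        norm_num

lemma measurable_Fr (r s : ℝ) : Measurable fun p : ℝ × ℝ => Fr r s p.1 p.2 := by
  unfold Fr
  simp only [intervalIntegral.integral_of_le Real.pi_pos.le]
  have h0 : Measurable fun q : ((ℝ × ℝ) × ℝ) × ℝ =>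
      q.1.1.1 * q.1.1.2 * Real.cos q.1.2 * (q.1.1.2 - s * Real.cos q.2) /
        (Xmm r s q.1.1.1 q.1.1.2 q.1.2 q.2) ^ 2 := by
    unfold Xmm
    fun_prop
  have h1 := h0.stronglyMeasurable.integral_prod_right' (ν := volume.restrict (Set.Ioc 0 π))
  have h2 := h1.integral_prod_right' (ν := volume.restrict (Set.Ioc 0 π))
  exact h2.measurable.const_mul _

lemma volume_closedBall_real_prod (x : ℝ × ℝ) {μ : ℝ} (hμ : 0 ≤ μ) :
    volume (Metric.closedBall x μ) = ENNReal.ofReal (4 * μ ^ 2) := by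
  rw [← Prod.mk.eta (p := x), ← closedBall_prod_same, Measure.volume_eq_prod, Measure.prod_prod,
    Real.volume_closedBall, Real.volume_closedBall, ← ENNReal.ofReal_mul (by positivity)]
  congr 1
  ring

lemma lintegral_inv_norm_le (x : ℝ × ℝ) {ρ : ℝ} (hρ : 0 ≤ ρ) :
    ∫⁻ p, ENNReal.ofReal ((Set.Iic ρ).indicator (fun t => t⁻¹) ‖p - x‖) ≤
      ENNReal.ofReal (8 * ρ) := by
  rw [lintegral_sub_right_eq_self
    (fun p : ℝ × ℝ => ENNReal.ofReal ((Set.Iic ρ).indicator (fun t => t⁻¹) ‖p‖)) x]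
  have hdim : Module.finrank ℝ (ℝ × ℝ) = 2 := by simp
  have heq : ∀ y ∈ Set.Ioi (0:ℝ), y ^ (Module.finrank ℝ (ℝ × ℝ) - 1) •
      (Set.Iic ρ).indicator (fun t => t⁻¹) y = (Set.Iic ρ).indicator (fun _ => (1:ℝ)) y := by
    intro y hy
    have hy' : y ≠ 0 := ne_of_gt hy
    rw [hdim]
    by_cases h : y ∈ Set.Iic ρ
    · simp [Set.indicator_of_mem h, hy']
    · simp [Set.indicator_of_notMem h]
  have hint1 : IntegrableOn ((Set.Iic ρ).indicator fun _ => (1:ℝ)) (Set.Ioi 0) := by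
    rw [IntegrableOn, integrable_indicator_iff measurableSet_Iic, IntegrableOn,
      Measure.restrict_restrict measurableSet_Iic, Set.inter_comm, Set.Ioi_inter_Iic]
    exact integrableOn_const (by simp)
  have hint : Integrable
      (fun p : ℝ × ℝ => (Set.Iic ρ).indicator (fun t : ℝ => t⁻¹) ‖p‖) := by
    rw [integrable_fun_norm_addHaar volume (f := (Set.Iic ρ).indicator (fun t : ℝ => t⁻¹)),
      integrableOn_congr_fun heq measurableSet_Ioi]
    exact hint1
  have hnn : ∀ p : ℝ × ℝ, 0 ≤ (Set.Iic ρ).indicator (fun t : ℝ => t⁻¹) ‖p‖ := fun p =>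
    Set.indicator_apply_nonneg fun _ => inv_nonneg.2 (norm_nonneg p)
  rw [← ofReal_integral_eq_lintegral_ofReal hint (ae_of_all _ hnn),
    integral_fun_norm_addHaar volume ((Set.Iic ρ).indicator (fun t : ℝ => t⁻¹)),
    setIntegral_congr_fun measurableSet_Ioi heq, setIntegral_indicator measurableSet_Iic,
    Set.Ioi_inter_Iic, hdim]
  have hball : volume.real (Metric.ball (0 : ℝ × ℝ) 1) ≤ 4 := by
    have h := volume_closedBall_real_prod 0 zero_le_one
    calc _ ≤ volume.real (Metric.closedBall (0 : ℝ × ℝ) 1) :=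
          measureReal_mono Metric.ball_subset_closedBall (by rw [h]; simp)
      _ = 4 := by rw [measureReal_def, h]; simp
  apply ENNReal.ofReal_le_ofReal
  simp only [integral_const, measureReal_restrict_apply_univ, Real.volume_real_Ioc_of_le hρ,
    nsmul_eq_mul, smul_eq_mul]
  push_cast
  nlinarith

/-- The weight `|p|² / |p - x|` has integral `O(μ³)` over `{|p - x| |p|² ≤ μ³}`,
uniformly in `x`. -/
lemma lintegral_sublevel_le (x : ℝ × ℝ) {μ : ℝ} (hμ : 0 < μ) :
    ∫⁻ p, ENNReal.ofReal (if ‖p - x‖ * ‖p‖ ^ 2 ≤ μ ^ 3 then ‖p‖ ^ 2 / ‖p - x‖ else 0) ≤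
      ENNReal.ofReal (160 * μ ^ 3) := by
  set R := ‖x‖ with hR
  set ρ := 4 * μ ^ 3 / R ^ 2 with hρ
  have hR0 : 0 ≤ R := norm_nonneg x
  have hρ0 : 0 ≤ ρ := by positivity
  have hpt : ∀ p : ℝ × ℝ,
      (if ‖p - x‖ * ‖p‖ ^ 2 ≤ μ ^ 3 then ‖p‖ ^ 2 / ‖p - x‖ else 0) ≤
        (Metric.closedBall (0 : ℝ × ℝ) μ).indicator (fun _ => μ) p +
        (Metric.closedBall x μ).indicator (fun _ => 4 * μ) p +
        4 * R ^ 2 * (Set.Iic ρ).indicator (fun t => t⁻¹) ‖p - x‖ := by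
    intro p
    have hq0 := norm_nonneg (p - x)
    have hp0 := norm_nonneg p
    have i1 : 0 ≤ (Metric.closedBall (0 : ℝ × ℝ) μ).indicator (fun _ => μ) p :=
      Set.indicator_apply_nonneg fun _ => hμ.le
    have i2 : 0 ≤ (Metric.closedBall x μ).indicator (fun _ => 4 * μ) p :=
      Set.indicator_apply_nonneg fun _ => by positivity
    have i3 : 0 ≤ 4 * R ^ 2 * (Set.Iic ρ).indicator (fun t => t⁻¹) ‖p - x‖ :=
      mul_nonneg (by positivity) (Set.indicator_apply_nonneg fun _ => inv_nonneg.2 hq0)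
    have t1 : ‖p‖ ≤ ‖p - x‖ + R := by simpa using norm_add_le (p - x) x
    have t2 : R ≤ ‖p - x‖ + ‖p‖ := by
      have := norm_sub_le p (p - x)
      rw [sub_sub_cancel] at this
      linarith
    split_ifs with h
    swap
    · positivity
    rcases hq0.eq_or_lt with hz | hq
    · rw [← hz, div_zero]
      rw [← hz] at i3
      positivity
    rcases le_total ‖p‖ ‖p - x‖ with hpq | hpq
    · have hm : ‖p‖ ≤ μ := by
        refine le_of_pow_le_pow_left₀ three_ne_zero hμ.le (le_trans ?_ h)
        nlinarith [sq_nonneg ‖p‖]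
      have : (Metric.closedBall (0 : ℝ × ℝ) μ).indicator (fun _ => μ) p = μ :=
        Set.indicator_of_mem (by simpa using hm) _
      have : ‖p‖ ^ 2 / ‖p - x‖ ≤ μ := by
        rw [div_le_iff₀ hq]
        nlinarith
      linarith
    rcases le_total R ‖p - x‖ with hRq | hRq
    · have hm : ‖p - x‖ ≤ μ := by
        refine le_of_pow_le_pow_left₀ three_ne_zero hμ.le (le_trans ?_ h)
        nlinarith [mul_le_mul hpq hpq hq0 hp0]
      have : (Metric.closedBall x μ).indicator (fun _ => 4 * μ) p = 4 * μ :=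
        Set.indicator_of_mem (by simpa [dist_eq_norm] using hm) _
      have : ‖p‖ ^ 2 / ‖p - x‖ ≤ 4 * μ := by
        rw [div_le_iff₀ hq]
        nlinarith
      linarith
    · have hRpos : 0 < R := hq.trans_le hRq
      have hm : ‖p - x‖ ≤ ρ := by
        rw [hρ, le_div_iff₀ (by positivity)]
        have : R ^ 2 ≤ 4 * ‖p‖ ^ 2 := by nlinarith
        nlinarith
      have : (Set.Iic ρ).indicator (fun t : ℝ => t⁻¹) ‖p - x‖ = ‖p - x‖⁻¹ :=
        Set.indicator_of_mem (Set.mem_Iic.2 hm) _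
      have : ‖p‖ ^ 2 / ‖p - x‖ ≤
          4 * R ^ 2 * (Set.Iic ρ).indicator (fun t => t⁻¹) ‖p - x‖ := by
        rw [this, ← div_eq_mul_inv]
        gcongr
        nlinarith
      linarith
  have hconst : ∀ (y : ℝ × ℝ) {c : ℝ}, 0 ≤ c →
      ∫⁻ p, ENNReal.ofReal ((Metric.closedBall y μ).indicator (fun _ => c) p) =
        ENNReal.ofReal (c * (4 * μ ^ 2)) := by
    intro y c hc
    have : ∀ p, ENNReal.ofReal ((Metric.closedBall y μ).indicator (fun _ => c) p) =
        (Metric.closedBall y μ).indicator (fun _ => ENNReal.ofReal c) p := by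
      intro p
      by_cases h : p ∈ Metric.closedBall y μ
      · simp only [Set.indicator_of_mem h]
      · simp only [Set.indicator_of_notMem h, ENNReal.ofReal_zero]
    simp only [this]
    rw [lintegral_indicator_const Metric.isClosed_closedBall.measurableSet,
      volume_closedBall_real_prod y hμ.le, ← ENNReal.ofReal_mul hc]
  calc _ ≤ ∫⁻ p, (ENNReal.ofReal ((Metric.closedBall (0 : ℝ × ℝ) μ).indicator (fun _ => μ) p) +
        ENNReal.ofReal ((Metric.closedBall x μ).indicator (fun _ => 4 * μ) p) +
        ENNReal.ofReal (4 * R ^ 2) *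
          ENNReal.ofReal ((Set.Iic ρ).indicator (fun t => t⁻¹) ‖p - x‖)) := by
        refine lintegral_mono fun p => ?_
        rw [← ENNReal.ofReal_mul (by positivity)]
        refine (ENNReal.ofReal_le_ofReal (hpt p)).trans ?_
        refine ENNReal.ofReal_add_le.trans ?_
        gcongr
        exact ENNReal.ofReal_add_le
    _ ≤ ENNReal.ofReal (μ * (4 * μ ^ 2)) + ENNReal.ofReal (4 * μ * (4 * μ ^ 2)) +
        ENNReal.ofReal (4 * R ^ 2) * ENNReal.ofReal (8 * ρ) := by
        have m1 : ∀ (y : ℝ × ℝ) (c : ℝ), Measurable fun p =>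
            ENNReal.ofReal ((Metric.closedBall y μ).indicator (fun _ => c) p) := fun y c =>
          (measurable_const.indicator Metric.isClosed_closedBall.measurableSet).ennreal_ofReal
        rw [lintegral_add_left (by exact (m1 0 μ).add (m1 x (4 * μ))), lintegral_add_left (m1 0 μ),
          hconst 0 hμ.le, hconst x (by positivity), lintegral_const_mul' _ _ ENNReal.ofReal_ne_top]
        gcongr
        exact lintegral_inv_norm_le x hρ0
    _ ≤ _ := by
        rw [← ENNReal.ofReal_mul (by positivity), ← ENNReal.ofReal_add (by positivity)
          (by positivity), ← ENNReal.ofReal_add (by positivity) (by positivity)]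
        apply ENNReal.ofReal_le_ofReal
        have : R ^ 2 * ρ ≤ 4 * μ ^ 3 := by
          rcases eq_or_ne R 0 with h | h
          · rw [h]
            nlinarith [pow_pos hμ 3]
          · rw [hρ, mul_div_cancel₀ _ (pow_ne_zero 2 h)]
        nlinarith [pow_pos hμ 3]

/-- Interpolation bound for the potential of `|w|` with kernel `|p - x|⁻¹`. -/
lemma lintegral_div_norm_sub_le (x : ℝ × ℝ) {w : ℝ × ℝ → ℝ} {N I : ℝ} (hN : 0 ≤ N) (hI : 0 ≤ I)
    (hw : Measurable w)
    (hb : ∀ᵐ p ∂(volume.restrict quadrant), |w p| ≤ N * (p.1 * p.2))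
    (hint : ∫⁻ p in quadrant, ENNReal.ofReal ((p.1 ^ 2 + p.2 ^ 2) * |w p|) = ENNReal.ofReal I) :
    ∫⁻ p in quadrant, ENNReal.ofReal (|w p| / ‖p - x‖) ≤ ENNReal.ofReal (161 * √I * √N) := by
  have hmem : ∀ᵐ p ∂(volume.restrict quadrant), p ∈ quadrant :=
    ae_restrict_mem (measurableSet_Ici.prod measurableSet_Ici)
  have split : ∀ μ : ℝ, 0 < μ → ∫⁻ p in quadrant, ENNReal.ofReal (|w p| / ‖p - x‖) ≤
      ENNReal.ofReal (160 * N * μ ^ 3 + I / μ ^ 3) := by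
    intro μ hμ
    have hμ3 := pow_pos hμ 3
    calc _ ≤ ∫⁻ p in quadrant, (ENNReal.ofReal N *
          ENNReal.ofReal (if ‖p - x‖ * ‖p‖ ^ 2 ≤ μ ^ 3 then ‖p‖ ^ 2 / ‖p - x‖ else 0) +
          ENNReal.ofReal (1 / μ ^ 3) * ENNReal.ofReal ((p.1 ^ 2 + p.2 ^ 2) * |w p|)) := by
          apply lintegral_mono_ae
          filter_upwards [hmem, hb] with p hp hwp
          have hp1 : 0 ≤ p.1 := hp.1
          have hp2 : 0 ≤ p.2 := hp.2
          have hn : ‖p‖ = max p.1 p.2 := by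
            rw [Prod.norm_def, Real.norm_of_nonneg hp1, Real.norm_of_nonneg hp2]
          have n1 : p.1 * p.2 ≤ ‖p‖ ^ 2 := by
            rw [hn, sq]
            exact mul_le_mul (le_max_left _ _) (le_max_right _ _) hp2 (hp1.trans (le_max_left _ _))
          have n2 : ‖p‖ ^ 2 ≤ p.1 ^ 2 + p.2 ^ 2 := by
            rw [hn]
            rcases max_choice p.1 p.2 with h | h <;> rw [h] <;>
              nlinarith [sq_nonneg p.1, sq_nonneg p.2]
          have hq0 := norm_nonneg (p - x)
          have hw0 := abs_nonneg (w p)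
          rw [← ENNReal.ofReal_mul hN, ← ENNReal.ofReal_mul (by positivity)]
          split_ifs with h
          · refine le_trans (ENNReal.ofReal_le_ofReal ?_) le_self_add
            rw [← mul_div_assoc]
            gcongr
            exact hwp.trans (by gcongr)
          · refine le_trans (ENNReal.ofReal_le_ofReal ?_) le_add_self
            push Not at h
            have hq : 0 < ‖p - x‖ := by
              rcases hq0.eq_or_lt with hz | hq
              · rw [← hz, zero_mul] at h
                linarith
              · exact hq
            rw [one_div, inv_mul_eq_div, div_le_div_iff₀ hq hμ3]
            calc |w p| * μ ^ 3 ≤ |w p| * (‖p - x‖ * (p.1 ^ 2 + p.2 ^ 2)) := by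
                  gcongr
                  exact h.le.trans (by gcongr)
              _ = _ := by ring
      _ ≤ ENNReal.ofReal N * ENNReal.ofReal (160 * μ ^ 3) +
          ENNReal.ofReal (1 / μ ^ 3) * ENNReal.ofReal I := by
          rw [lintegral_add_right _ (by fun_prop), lintegral_const_mul' _ _ ENNReal.ofReal_ne_top,
            lintegral_const_mul' _ _ ENNReal.ofReal_ne_top, hint]
          gcongr
          exact (setLIntegral_le_lintegral _ _).trans (lintegral_sublevel_le x hμ)
      _ = _ := by
          rw [← ENNReal.ofReal_mul hN, ← ENNReal.ofReal_mul (by positivity),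
            ← ENNReal.ofReal_add (by positivity) (by positivity)]
          congr 1
          ring
  have cube : ∀ t : ℝ, 0 < t → ∫⁻ p in quadrant, ENNReal.ofReal (|w p| / ‖p - x‖) ≤
      ENNReal.ofReal (160 * N * t + I / t) := by
    intro t ht
    have h := split (t ^ (1 / 3 : ℝ)) (Real.rpow_pos_of_pos ht _)
    rwa [← Real.rpow_natCast, ← Real.rpow_mul ht.le, show (1 / 3 : ℝ) * (3 : ℕ) = 1 by norm_num,
      Real.rpow_one] at h
  rcases hN.eq_or_lt with rfl | hN'
  · rw [lintegral_congr_ae (g := 0)]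
    · simp
    · filter_upwards [hb] with p hp
      have : |w p| = 0 := le_antisymm (by simpa using hp) (abs_nonneg _)
      simp [this]
  rcases hI.eq_or_lt with rfl | hI'
  · refine ENNReal.le_of_forall_pos_le_add fun ε hε _ => ?_
    have hε' : (0 : ℝ) < ε := hε
    refine ((cube (ε / (160 * N)) (by positivity)).trans (le_of_eq ?_)).trans le_add_self
    rw [zero_div, add_zero, mul_div_cancel₀ _ (by positivity), ENNReal.ofReal_coe_nnreal]
  · have hsN := Real.sqrt_pos.2 hN'
    have hsI := Real.sqrt_pos.2 hI'
    refine (cube (√I / √N) (by positivity)).trans (ENNReal.ofReal_le_ofReal (le_of_eq ?_))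
    have eN := Real.sq_sqrt hN
    have eI := Real.sq_sqrt hI
    field_simp
    rw [eN, eI]
    ring

lemma integrableOn_mul_and_abs_integral_le (x : ℝ × ℝ) {g w : ℝ × ℝ → ℝ} {N I c : ℝ}
    (hN : 0 ≤ N) (hI : 0 ≤ I) (hw : Measurable w) (hg : Measurable g) (hc : 0 ≤ c)
    (hb : ∀ᵐ p ∂(volume.restrict quadrant), |w p| ≤ N * (p.1 * p.2))
    (hint : ∫⁻ p in quadrant, ENNReal.ofReal ((p.1 ^ 2 + p.2 ^ 2) * |w p|) = ENNReal.ofReal I)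
    (hgb : ∀ p ∈ quadrant, p ≠ x → |g p| ≤ c / ‖p - x‖) :
    IntegrableOn (fun p => g p * w p) quadrant ∧
      |∫ p in quadrant, g p * w p| ≤ c * (161 * √I * √N) := by
  have hbound : ∫⁻ p in quadrant, ‖g p * w p‖ₑ ≤ ENNReal.ofReal (c * (161 * √I * √N)) := by
    calc _ ≤ ∫⁻ p in quadrant, ENNReal.ofReal c * ENNReal.ofReal (|w p| / ‖p - x‖) := by
          apply lintegral_mono_ae
          filter_upwards [ae_restrict_mem (measurableSet_Ici.prod measurableSet_Ici),
            ae_restrict_of_ae (Measure.ae_ne volume x)] with p hp hpx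
          rw [← ENNReal.ofReal_mul hc, ← ofReal_norm, norm_mul, Real.norm_eq_abs,
            Real.norm_eq_abs]
          apply ENNReal.ofReal_le_ofReal
          calc |g p| * |w p| ≤ c / ‖p - x‖ * |w p| := by
                gcongr
                exact hgb p hp hpx
            _ = _ := by ring
      _ ≤ _ := by
          rw [lintegral_const_mul' _ _ ENNReal.ofReal_ne_top, ENNReal.ofReal_mul hc]
          gcongr
          exact lintegral_div_norm_sub_le x hN hI hw hb hint
  have hi : IntegrableOn (fun p => g p * w p) quadrant :=
    ⟨(hg.mul hw).aestronglyMeasurable, hbound.trans_lt ENNReal.ofReal_lt_top⟩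
  refine ⟨hi, ?_⟩
  rw [← Real.norm_eq_abs]
  refine (norm_integral_le_lintegral_norm _).trans ?_
  refine ENNReal.toReal_le_of_le_ofReal (by positivity) ?_
  simpa only [ofReal_norm] using hbound

/-- There is an absolute constant `C > 0` such that: if `w` is measurable,
`|w(r̄,s̄)| ≤ N r̄ s̄` a.e. on `Π`, and `∫∫_Π (r̄² + s̄²)|w| = I < ∞`, then for every
`(r,s) ∈ Π` the integrals defining `u^r[w](r,s)` and `u^s[w](r,s)` converge absolutely,
and `sup_{(r,s) ∈ Π} max{|u^r[w](r,s)|, |u^s[w](r,s)|} ≤ C I^{1/2} N^{1/2}`. -/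
theorem stmt_8 :
    ∃ C : ℝ, 0 < C ∧
      ∀ (w : ℝ × ℝ → ℝ) (N I : ℝ), Measurable w → 0 ≤ N → 0 ≤ I →
        (∀ᵐ p ∂(volume.restrict quadrant), |w p| ≤ N * (p.1 * p.2)) →
        (∫⁻ p in quadrant, ENNReal.ofReal ((p.1 ^ 2 + p.2 ^ 2) * |w p|))
          = ENNReal.ofReal I →
        ∀ r s : ℝ, 0 ≤ r → 0 ≤ s →
          IntegrableOn (fun p : ℝ × ℝ => Fr r s p.1 p.2 * w p) quadrant ∧
          IntegrableOn (fun p : ℝ × ℝ => Fs r s p.1 p.2 * w p) quadrant ∧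
          max |uR w r s| |uS w r s| ≤ C * Real.sqrt I * Real.sqrt N := by
  refine ⟨365 * 161, by norm_num, fun w N I hw hN hI hb hint r s hr hs => ?_⟩
  have geom : ∀ p : ℝ × ℝ, |r - p.1| ≤ ‖p - (r, s)‖ ∧ |s - p.2| ≤ ‖p - (r, s)‖ ∧
      ‖p - (r, s)‖ ^ 2 ≤ (r - p.1) ^ 2 + (s - p.2) ^ 2 := by
    intro p
    have hn : ‖p - (r, s)‖ = max |r - p.1| |s - p.2| := by
      rw [norm_sub_rev, Prod.norm_def, Real.norm_eq_abs, Real.norm_eq_abs]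
      rfl
    rw [hn]
    refine ⟨le_max_left _ _, le_max_right _ _, ?_⟩
    rcases max_choice |r - p.1| |s - p.2| with h | h <;> rw [h, sq_abs] <;>
      nlinarith [sq_nonneg (r - p.1), sq_nonneg (s - p.2)]
  have hR := integrableOn_mul_and_abs_integral_le (r, s) (g := fun p => Fr r s p.1 p.2) (c := 365)
    hN hI hw (measurable_Fr r s) (by norm_num) hb hint fun p hp hpx => by
      obtain ⟨h1, h2, h3⟩ := geom p
      exact abs_Fr_le hr hs hp.1 hp.2 (norm_pos_iff.2 (sub_ne_zero.2 hpx)) h3 h1 h2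
  have hS := integrableOn_mul_and_abs_integral_le (r, s) (g := fun p => Fs r s p.1 p.2) (c := 365)
    hN hI hw ((measurable_Fr s r).comp measurable_swap) (by norm_num) hb hint fun p hp hpx => by
      obtain ⟨h1, h2, h3⟩ := geom p
      exact abs_Fr_le hs hr hp.2 hp.1 (norm_pos_iff.2 (sub_ne_zero.2 hpx)) (by linarith) h2 h1
  refine ⟨hR.1, hS.1, max_le ?_ ?_⟩
  · rw [uR, abs_neg]
    exact hR.2.trans (le_of_eq (by ring))
  · rw [uS]
    exact hS.2.trans (le_of_eq (by ring))
end

section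
/- There exists an absolute constant C > 0 such that for every measurable w : Π → ℝ and every (r, s) ∈ Π, one has ∫∫_Π |F^r(r, s, r̄, s̄)| |w(r̄, s̄)| ds̄ dr̄ ≤ C r Λ(W/ρ) and ∫∫_Π |F^s(r, s, r̄, s̄)| |w(r̄, s̄)| ds̄ dr̄ ≤ C s Λ(W/σ); in particular, if Λ(W/ρ) < ∞ and Λ(W/σ) < ∞, then |u^r[w](r, s)| ≤ C r Λ(W/ρ) and |u^s[w](r, s)| ≤ C s Λ(W/σ) for all (r, s) ∈ Π. -/
open MeasureTheory Real ENNReal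

/-- `r_x = √(x₁² + x₂²)` for `x ∈ ℝ⁴`. -/
noncomputable def rx (x : Fin 4 → ℝ) : ℝ := Real.sqrt ((x 0) ^ 2 + (x 1) ^ 2)

/-- `s_x = √(x₃² + x₄²)` for `x ∈ ℝ⁴`. -/
noncomputable def sx (x : Fin 4 → ℝ) : ℝ := Real.sqrt ((x 2) ^ 2 + (x 3) ^ 2)

/-- `Λ(f) = ∫₀^∞ (vol{x ∈ ℝ⁴ : |f(x)| > λ})^{1/4} dλ`, comparable to the
Lorentz `L^{4,1}(ℝ⁴)` norm of `f`. -/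
noncomputable def Lam (f : (Fin 4 → ℝ) → ℝ) : ℝ≥0∞ :=
  ∫⁻ l in Set.Ioi (0:ℝ), (volume {x : Fin 4 → ℝ | l < |f x|}) ^ ((1:ℝ)/4)

/-- In dimension four the kernel `|y - z|⁻³` lies in weak `L^{4/3}`, in integrated form. -/
theorem setLIntegral_inv_dist_pow_three_le (z : (ℝ × ℝ) × ℝ × ℝ) (A : Set ((ℝ × ℝ) × ℝ × ℝ)) :
    ∫⁻ y in A, ENNReal.ofReal ((dist y z ^ 3)⁻¹) ≤ 49 * volume A ^ ((1 : ℝ) / 4) := by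
  rcases eq_or_ne (volume A) 0 with h0 | h0
  · rw [setLIntegral_measure_zero _ _ h0]; exact zero_le
  rcases eq_or_ne (volume A) ⊤ with ht | ht
  · rw [ht, ENNReal.top_rpow_of_pos (by norm_num), ENNReal.mul_top (by norm_num)]; exact le_top
  obtain ⟨a, ha, hA⟩ : ∃ a : ℝ, 0 < a ∧ volume A = ENNReal.ofReal a :=
    ⟨(volume A).toReal, ENNReal.toReal_pos h0 ht, (ENNReal.ofReal_toReal ht).symm⟩
  have hmeas : Measurable fun y : (ℝ × ℝ) × ℝ × ℝ => (dist y z ^ 3)⁻¹ := by fun_prop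
  rw [lintegral_eq_lintegral_meas_lt _ (Filter.Eventually.of_forall fun y => by positivity)
    hmeas.aemeasurable]
  set T : ℝ := a ^ (-(3 : ℝ) / 4) with hT
  have hTpos : 0 < T := by positivity
  have hlow : ∫⁻ t in Set.Ioc 0 T, (volume.restrict A) {y | t < (dist y z ^ 3)⁻¹}
      ≤ ENNReal.ofReal (a ^ ((1 : ℝ) / 4)) := by
    calc _ ≤ ∫⁻ _ in Set.Ioc 0 T, ENNReal.ofReal a := by
          refine lintegral_mono fun t => ?_
          rw [← hA]
          exact (measure_mono (Set.subset_univ _)).trans (by simp)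
      _ = ENNReal.ofReal (a * T) := by
          rw [setLIntegral_const, Real.volume_Ioc, sub_zero, ENNReal.ofReal_mul ha.le]
      _ = _ := by
          congr 1
          rw [hT]
          nth_rewrite 1 [← Real.rpow_one a]
          rw [← Real.rpow_add ha]
          norm_num
  have hhigh : ∫⁻ t in Set.Ioi T, (volume.restrict A) {y | t < (dist y z ^ 3)⁻¹}
      ≤ ENNReal.ofReal (48 * a ^ ((1 : ℝ) / 4)) := by
    calc _ ≤ ∫⁻ t in Set.Ioi T, ENNReal.ofReal (16 * t ^ (-(4 : ℝ) / 3)) := by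
          refine setLIntegral_mono (by fun_prop) fun t ht => ?_
          have htpos : 0 < t := hTpos.trans ht
          have hsub : {y | t < (dist y z ^ 3)⁻¹} ⊆ Metric.closedBall z (t ^ (-(1 : ℝ) / 3)) := by
            intro y hy
            replace hy : t < (dist y z ^ 3)⁻¹ := hy
            rw [Metric.mem_closedBall]
            by_contra! hlt
            have hpos : 0 < t ^ (-(1 : ℝ) / 3) := by positivity
            have h3 : (t ^ (-(1 : ℝ) / 3)) ^ 3 = t⁻¹ := by
              rw [← Real.rpow_natCast, ← Real.rpow_mul htpos.le, ← Real.rpow_neg_one]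
              norm_num
            have h4 : t⁻¹ ≤ dist y z ^ 3 := by
              rw [← h3]; gcongr
            have h5 : (dist y z ^ 3)⁻¹ ≤ t := by
              have := inv_anti₀ (by positivity) h4
              rwa [inv_inv] at this
            linarith
          refine (Measure.restrict_apply_le _ _).trans ((measure_mono hsub).trans ?_)
          rw [← closedBall_prod_same, ← closedBall_prod_same, ← closedBall_prod_same]
          simp only [Measure.volume_eq_prod, Measure.prod_prod, Real.volume_closedBall]
          rw [← ENNReal.ofReal_mul (by positivity), ← ENNReal.ofReal_mul (by positivity)]
          apply le_of_eq
          congr 1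
          have h4 : t ^ (-(4 : ℝ) / 3) = (t ^ (-(1 : ℝ) / 3)) ^ 4 := by
            rw [← Real.rpow_natCast, ← Real.rpow_mul htpos.le]
            norm_num
          rw [h4]; ring
      _ = ENNReal.ofReal (48 * a ^ ((1 : ℝ) / 4)) := by
          rw [← ofReal_integral_eq_lintegral_ofReal
            ((integrableOn_Ioi_rpow_of_lt (by norm_num) hTpos).const_mul _)
            ((ae_restrict_iff' measurableSet_Ioi).2 (Filter.Eventually.of_forall fun t ht => by
              have : 0 < t := hTpos.trans ht
              positivity)), integral_const_mul, integral_Ioi_rpow_of_lt (by norm_num) hTpos, hT,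
            ← Real.rpow_mul ha.le]
          congr 1
          norm_num
          ring
  rw [← Set.Ioc_union_Ioi_eq_Ioi hTpos.le]
  refine (lintegral_union_le _ _ _).trans ((add_le_add hlow hhigh).trans (le_of_eq ?_))
  rw [hA, ENNReal.ofReal_rpow_of_pos ha, ← ENNReal.ofReal_add (by positivity) (by positivity)]
  rw [show (49 : ℝ≥0∞) = ENNReal.ofReal 49 by norm_num, ← ENNReal.ofReal_mul (by norm_num)]
  congr 1
  ring

/-- Duality between the Lorentz space `L^{4,1}` and weak `L^{4/3}` for the kernel `|y - z|⁻³`. -/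
theorem lintegral_mul_inv_dist_pow_three_le (z : (ℝ × ℝ) × ℝ × ℝ) {f : (ℝ × ℝ) × ℝ × ℝ → ℝ}
    (hf : Measurable f) (hf0 : ∀ y, 0 ≤ f y) :
    ∫⁻ y, ENNReal.ofReal ((dist y z ^ 3)⁻¹) * ENNReal.ofReal (f y)
      ≤ 49 * ∫⁻ l in Set.Ioi (0 : ℝ), volume {y | l < f y} ^ ((1 : ℝ) / 4) := by
  have hK : Measurable fun y : (ℝ × ℝ) × ℝ × ℝ => ENNReal.ofReal ((dist y z ^ 3)⁻¹) := by
    fun_prop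
  have h := lintegral_withDensity_eq_lintegral_mul volume hK hf.ennreal_ofReal
  simp only [Pi.mul_apply] at h
  rw [← h, lintegral_eq_lintegral_meas_lt _ (Filter.Eventually.of_forall hf0) hf.aemeasurable,
    ← lintegral_const_mul' _ _ (by norm_num)]
  refine lintegral_mono fun l => ?_
  rw [withDensity_apply _ (measurableSet_lt measurable_const hf)]
  exact setLIntegral_inv_dist_pow_three_le z _

/-- A product version of the polar change of variables. -/
theorem lintegral_polar_prod {g : (ℝ × ℝ) × ℝ × ℝ → ℝ≥0∞} (hg : Measurable g) :
    ∫⁻ y, g y = ∫⁻ p in Set.Ioi (0 : ℝ) ×ˢ Set.Ioo (-π) π, ∫⁻ q in Set.Ioi (0 : ℝ) ×ˢ Set.Ioo (-π) π,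
      ENNReal.ofReal p.1 * (ENNReal.ofReal q.1 *
        g ((p.1 * Real.cos p.2, p.1 * Real.sin p.2), (q.1 * Real.cos q.2, q.1 * Real.sin q.2))) := by
  rw [Measure.volume_eq_prod, lintegral_prod _ hg.aemeasurable, ← lintegral_comp_polarCoord_symm]
  simp only [polarCoord_target, polarCoord_symm_apply, smul_eq_mul]
  refine lintegral_congr fun p => ?_
  rw [← lintegral_comp_polarCoord_symm, ← lintegral_const_mul']
  · simp only [polarCoord_target, polarCoord_symm_apply, smul_eq_mul]
  · exact ENNReal.ofReal_ne_top

theorem measurePreserving_fin_four :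
    MeasurePreserving (fun y : (ℝ × ℝ) × ℝ × ℝ => (![y.1.1, y.1.2, y.2.1, y.2.2] : Fin 4 → ℝ)) := by
  have hm : Measurable fun y : (ℝ × ℝ) × ℝ × ℝ =>
      (![y.1.1, y.1.2, y.2.1, y.2.2] : Fin 4 → ℝ) := by
    rw [measurable_pi_iff]
    intro i
    fin_cases i <;> simp <;> fun_prop
  refine ⟨hm, (Measure.pi_eq fun S hS => ?_).symm⟩
  rw [Measure.map_apply hm (MeasurableSet.univ_pi hS)]
  have : (fun y : (ℝ × ℝ) × ℝ × ℝ => (![y.1.1, y.1.2, y.2.1, y.2.2] : Fin 4 → ℝ)) ⁻¹'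
      Set.univ.pi S = (S 0 ×ˢ S 1) ×ˢ (S 2 ×ˢ S 3) := by
    ext y
    simp [Fin.forall_fin_succ, and_assoc]
  rw [this]
  simp only [Measure.volume_eq_prod, Measure.prod_prod, Fin.prod_univ_four, mul_assoc]

/-- `Λ` computed in the coordinates `ℝ² × ℝ²`. -/
theorem Lam_eq {f : (Fin 4 → ℝ) → ℝ} (hf : Measurable f) :
    Lam f = ∫⁻ l in Set.Ioi (0 : ℝ), volume {y : (ℝ × ℝ) × ℝ × ℝ |
      l < |f ![y.1.1, y.1.2, y.2.1, y.2.2]|} ^ ((1 : ℝ) / 4) := by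
  refine lintegral_congr fun l => ?_
  rw [← measurePreserving_fin_four.measure_preimage (s := {x | l < |f x|})
    (measurableSet_lt measurable_const (by fun_prop)).nullMeasurableSet]
  rfl

theorem Xmm_nonneg {r s rb sb : ℝ} (hr : 0 ≤ r) (hs : 0 ≤ s) (hrb : 0 ≤ rb) (hsb : 0 ≤ sb)
    (θ φ : ℝ) : 0 ≤ Xmm r s rb sb θ φ := by
  have h1 : 0 ≤ 1 - Real.cos θ := sub_nonneg.2 (Real.cos_le_one θ)
  have h2 : 0 ≤ 1 - Real.cos φ := sub_nonneg.2 (Real.cos_le_one φ)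
  unfold Xmm
  positivity

theorem abs_sub_mul_cos_le_sqrt_Xmm {r rb : ℝ} (hr : 0 ≤ r) (hrb : 0 ≤ rb) (s sb θ φ : ℝ) :
    |sb - s * Real.cos φ| ≤ √(Xmm r s rb sb θ φ) := by
  apply Real.abs_le_sqrt
  have h1 : 0 ≤ r * rb * (1 - Real.cos θ) :=
    mul_nonneg (mul_nonneg hr hrb) (sub_nonneg.2 (Real.cos_le_one θ))
  have h2 : 0 ≤ s ^ 2 * (1 - Real.cos φ ^ 2) :=
    mul_nonneg (sq_nonneg _) (sub_nonneg.2 (Real.cos_sq_le_one φ))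
  unfold Xmm
  nlinarith [sq_nonneg (r - rb)]

theorem Fr_summand_le_near {r s rb sb : ℝ} (hr : 0 ≤ r) (hs : 0 ≤ s) (hrb : 0 ≤ rb) (hsb : 0 ≤ sb)
    (h : rb ≤ 2 * r) (θ φ : ℝ) :
    |rb * sb * Real.cos θ * (sb - s * Real.cos φ) / (Xmm r s rb sb θ φ) ^ 2|
      ≤ 48 * r * (sb * (Xmm r s rb sb θ φ * √(Xmm r s rb sb θ φ))⁻¹) := by
  have hX := Xmm_nonneg hr hs hrb hsb θ φ
  have hS := abs_sub_mul_cos_le_sqrt_Xmm hr hrb s sb θ φ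
  have hsq := Real.sq_sqrt hX
  set X := Xmm r s rb sb θ φ
  rcases hX.eq_or_lt with h0 | hpos
  · simp [← h0]
  have hq : 0 < √X := Real.sqrt_pos.2 hpos
  rw [abs_div, abs_mul, abs_mul, abs_mul, abs_of_nonneg hrb, abs_of_nonneg hsb,
    abs_of_nonneg (sq_nonneg X), div_le_iff₀ (by positivity)]
  have h1 : rb * sb * |Real.cos θ| * |sb - s * Real.cos φ| ≤ 48 * r * sb * 1 * √X := by
    gcongr
    · linarith
    · exact Real.abs_cos_le_one θ
  refine h1.trans (le_of_eq ?_)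
  field_simp
  rw [hsq]

theorem Fr_summand_le_far {r s rb sb : ℝ} (hr : 0 ≤ r) (hs : 0 ≤ s) (hrb : 0 ≤ rb) (hsb : 0 ≤ sb)
    (h : 2 * r < rb) (θ φ : ℝ) :
    |rb * sb * Real.cos θ * (sb - s * Real.cos φ) / (Xmm r s rb sb θ φ) ^ 2 -
        rb * sb * Real.cos θ * (sb - s * Real.cos φ) / (Xmm r s rb sb (π / 2) φ) ^ 2|
      ≤ 48 * r * (sb * (Xmm r s rb sb θ φ * √(Xmm r s rb sb θ φ))⁻¹) := by
  have hX := Xmm_nonneg hr hs hrb hsb θ φ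
  have hS := abs_sub_mul_cos_le_sqrt_Xmm hr hrb s sb θ φ
  have hsq := Real.sq_sqrt hX
  have hc := Real.abs_cos_le_one θ
  have hrb0 : 0 < rb := by linarith
  have hXlow : rb ^ 2 ≤ 4 * Xmm r s rb sb θ φ := by
    have h1 : 0 ≤ r * rb * (1 - Real.cos θ) :=
      mul_nonneg (mul_nonneg hr hrb) (sub_nonneg.2 (Real.cos_le_one θ))
    have h2 : 0 ≤ s * sb * (1 - Real.cos φ) :=
      mul_nonneg (mul_nonneg hs hsb) (sub_nonneg.2 (Real.cos_le_one φ))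
    unfold Xmm
    nlinarith [sq_nonneg (s - sb)]
  have hYX : Xmm r s rb sb θ φ = Xmm r s rb sb (π / 2) φ - 2 * r * rb * Real.cos θ := by
    unfold Xmm
    rw [Real.cos_pi_div_two]
    ring
  have hXY : Xmm r s rb sb θ φ ≤ 2 * Xmm r s rb sb (π / 2) φ := by
    have h2 : 0 ≤ s * sb * (1 - Real.cos φ) :=
      mul_nonneg (mul_nonneg hs hsb) (sub_nonneg.2 (Real.cos_le_one φ))
    have h3 : 0 ≤ r * rb * (1 + Real.cos θ) :=
      mul_nonneg (mul_nonneg hr hrb) (by linarith [Real.neg_one_le_cos θ])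
    unfold Xmm
    rw [Real.cos_pi_div_two]
    nlinarith [sq_nonneg (s - sb), sq_nonneg (r - rb)]
  set X := Xmm r s rb sb θ φ
  set Y := Xmm r s rb sb (π / 2) φ
  have hXpos : 0 < X := by nlinarith
  have hYpos : 0 < Y := by linarith
  have hq : 0 < √X := Real.sqrt_pos.2 hXpos
  have hdiff : |1 / X ^ 2 - 1 / Y ^ 2| ≤ 48 * r / rb * (1 / X ^ 2) := by
    have e : 1 / X ^ 2 - 1 / Y ^ 2 = 2 * r * rb * Real.cos θ * (1 / (X ^ 2 * Y) + 1 / (X * Y ^ 2)) := by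
      have e2 : 2 * r * rb * Real.cos θ = Y - X := by linarith
      rw [e2]
      field_simp
      ring
    have hY1 : 1 / Y ≤ 2 / X := by
      rw [div_le_div_iff₀ hYpos hXpos]; linarith
    have hY2 : 1 / X ≤ 4 / rb ^ 2 := by
      rw [div_le_div_iff₀ hXpos (by positivity)]; linarith
    rw [e, abs_mul, abs_mul, abs_of_nonneg (show 0 ≤ 2 * r * rb by positivity),
      abs_of_nonneg (show 0 ≤ 1 / (X ^ 2 * Y) + 1 / (X * Y ^ 2) by positivity)]
    calc 2 * r * rb * |Real.cos θ| * (1 / (X ^ 2 * Y) + 1 / (X * Y ^ 2))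
        = 2 * r * rb * |Real.cos θ| * (1 / X ^ 2 * (1 / Y) + 1 / X * (1 / Y) ^ 2) := by
          field_simp
      _ ≤ 2 * r * rb * 1 * (1 / X ^ 2 * (2 / X) + 1 / X * (2 / X) ^ 2) := by gcongr
      _ = 12 * r * rb * (1 / X ^ 2) * (1 / X) := by field_simp; ring
      _ ≤ 12 * r * rb * (1 / X ^ 2) * (4 / rb ^ 2) := by gcongr
      _ = _ := by field_simp; ring
  calc _ = rb * sb * |Real.cos θ| * |sb - s * Real.cos φ| * |1 / X ^ 2 - 1 / Y ^ 2| := by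
        rw [← abs_of_nonneg (mul_nonneg hrb hsb), ← abs_mul, ← abs_mul, ← abs_mul,
          abs_of_nonneg (mul_nonneg hrb hsb)]
        congr 1
        ring
    _ ≤ rb * sb * 1 * √X * (48 * r / rb * (1 / X ^ 2)) := by gcongr
    _ = _ := by
        field_simp
        rw [hsq]
        ring

theorem enorm_intervalIntegral_iterated_le {G H : ℝ → ℝ → ℝ} (h : ∀ θ φ, |G θ φ| ≤ H θ φ) :
    ‖∫ θ in (0 : ℝ)..π, ∫ φ in (0 : ℝ)..π, G θ φ‖ₑ
      ≤ ∫⁻ θ in Set.Ioo 0 π, ∫⁻ φ in Set.Ioo 0 π, ENNReal.ofReal (H θ φ) := by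
  simp only [intervalIntegral.integral_of_le Real.pi_pos.le, ← restrict_Ioo_eq_restrict_Ioc]
  refine (enorm_integral_le_lintegral_enorm _).trans (lintegral_mono fun θ => ?_)
  refine (enorm_integral_le_lintegral_enorm _).trans (lintegral_mono fun φ => ?_)
  rw [← ofReal_norm]
  exact ENNReal.ofReal_le_ofReal (h θ φ)

theorem Fr_eq_of_lt {r s rb sb : ℝ} (hr : 0 ≤ r) (hs : 0 ≤ s) (hrb : 0 ≤ rb) (hsb : 0 ≤ sb)
    (h : 2 * r < rb) :
    Fr r s rb sb = (2 / π ^ 2) * ∫ θ in (0 : ℝ)..π, ∫ φ in (0 : ℝ)..π,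
      (rb * sb * Real.cos θ * (sb - s * Real.cos φ) / (Xmm r s rb sb θ φ) ^ 2 -
        rb * sb * Real.cos θ * (sb - s * Real.cos φ) / (Xmm r s rb sb (π / 2) φ) ^ 2) := by
  have hpos : ∀ θ φ, Xmm r s rb sb θ φ ≠ 0 := fun θ φ => by
    have h1 : 0 ≤ r * rb * (1 - Real.cos θ) :=
      mul_nonneg (mul_nonneg hr hrb) (sub_nonneg.2 (Real.cos_le_one θ))
    have h2 : 0 ≤ s * sb * (1 - Real.cos φ) :=
      mul_nonneg (mul_nonneg hs hsb) (sub_nonneg.2 (Real.cos_le_one φ))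
    have h3 : 0 < (r - rb) ^ 2 := by
      have : r - rb < 0 := by linarith
      exact sq_pos_of_neg this
    unfold Xmm
    nlinarith [sq_nonneg (s - sb)]
  have hXc : Continuous fun p : ℝ × ℝ => Xmm r s rb sb p.1 p.2 := by unfold Xmm; fun_prop
  have hXc' : Continuous fun p : ℝ × ℝ => Xmm r s rb sb (π / 2) p.2 := by unfold Xmm; fun_prop
  have hA : Continuous (Function.uncurry fun θ φ =>
      rb * sb * Real.cos θ * (sb - s * Real.cos φ) / (Xmm r s rb sb θ φ) ^ 2) :=
    Continuous.div (by fun_prop) (hXc.pow 2) fun p => pow_ne_zero _ (hpos _ _)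
  have hB : Continuous (Function.uncurry fun θ φ =>
      rb * sb * Real.cos θ * (sb - s * Real.cos φ) / (Xmm r s rb sb (π / 2) φ) ^ 2) :=
    Continuous.div (by fun_prop) (hXc'.pow 2) fun p => pow_ne_zero _ (hpos _ _)
  have hzero : ∫ θ in (0 : ℝ)..π, ∫ φ in (0 : ℝ)..π,
      rb * sb * Real.cos θ * (sb - s * Real.cos φ) / (Xmm r s rb sb (π / 2) φ) ^ 2 = 0 := by
    have : ∀ θ φ, rb * sb * Real.cos θ * (sb - s * Real.cos φ) / (Xmm r s rb sb (π / 2) φ) ^ 2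
        = Real.cos θ * (rb * sb * (sb - s * Real.cos φ) / (Xmm r s rb sb (π / 2) φ) ^ 2) :=
      fun θ φ => by ring
    simp only [this, intervalIntegral.integral_const_mul, intervalIntegral.integral_mul_const,
      integral_cos, Real.sin_pi, Real.sin_zero, sub_zero, zero_mul]
  have hinner : ∀ θ, ∫ φ in (0 : ℝ)..π,
      (rb * sb * Real.cos θ * (sb - s * Real.cos φ) / (Xmm r s rb sb θ φ) ^ 2 -
        rb * sb * Real.cos θ * (sb - s * Real.cos φ) / (Xmm r s rb sb (π / 2) φ) ^ 2) =
      (∫ φ in (0 : ℝ)..π,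
        rb * sb * Real.cos θ * (sb - s * Real.cos φ) / (Xmm r s rb sb θ φ) ^ 2) -
      ∫ φ in (0 : ℝ)..π,
        rb * sb * Real.cos θ * (sb - s * Real.cos φ) / (Xmm r s rb sb (π / 2) φ) ^ 2 := fun θ =>
    intervalIntegral.integral_sub
      ((hA.comp (Continuous.prodMk_right θ)).intervalIntegrable _ _)
      ((hB.comp (Continuous.prodMk_right θ)).intervalIntegrable _ _)
  simp only [hinner]
  rw [intervalIntegral.integral_sub
    ((intervalIntegral.continuous_parametric_intervalIntegral_of_continuous' hA _ _).intervalIntegrable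
      _ _)
    ((intervalIntegral.continuous_parametric_intervalIntegral_of_continuous' hB _ _).intervalIntegrable
      _ _), hzero, sub_zero]
  rfl

/-- The kernel estimate `|F^r| ≤ C r ∫∫ s̄ X₋₋^{-3/2}`; for `r̄ > 2r` it uses `∫ cos θ̄ dθ̄ = 0`. -/
theorem enorm_Fr_le {r s rb sb : ℝ} (hr : 0 ≤ r) (hs : 0 ≤ s) (hrb : 0 ≤ rb) (hsb : 0 ≤ sb) :
    ‖Fr r s rb sb‖ₑ ≤ ∫⁻ θ in Set.Ioo 0 π, ∫⁻ φ in Set.Ioo 0 π,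
      ENNReal.ofReal (48 * r * (sb * (Xmm r s rb sb θ φ * √(Xmm r s rb sb θ φ))⁻¹)) := by
  have hc : ‖(2 / π ^ 2 : ℝ)‖ₑ ≤ 1 := by
    rw [← ofReal_norm, Real.norm_of_nonneg (by positivity), ENNReal.ofReal_le_one,
      div_le_one (by positivity)]
    nlinarith [Real.pi_gt_three]
  rcases le_or_gt rb (2 * r) with h | h
  · rw [Fr, enorm_mul]
    exact (mul_le_of_le_one_left' hc).trans
      (enorm_intervalIntegral_iterated_le (Fr_summand_le_near hr hs hrb hsb h))
  · rw [Fr_eq_of_lt hr hs hrb hsb h, enorm_mul]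
    exact (mul_le_of_le_one_left' hc).trans
      (enorm_intervalIntegral_iterated_le (Fr_summand_le_far hr hs hrb hsb h))

theorem inv_Xmm_mul_sqrt_le {r s rb sb : ℝ} (hr : 0 ≤ r) (hs : 0 ≤ s) (hrb : 0 ≤ rb) (hsb : 0 ≤ sb)
    (θ φ : ℝ) :
    (Xmm r s rb sb θ φ * √(Xmm r s rb sb θ φ))⁻¹ ≤
      (dist ((rb * Real.cos θ, rb * Real.sin θ), (sb * Real.cos φ, sb * Real.sin φ))
        (((r, 0), (s, 0)) : (ℝ × ℝ) × ℝ × ℝ) ^ 3)⁻¹ := by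
  have hX := Xmm_nonneg hr hs hrb hsb θ φ
  have hX' : Xmm r s rb sb θ φ = (rb * Real.cos θ - r) ^ 2 + (rb * Real.sin θ) ^ 2 +
      (sb * Real.cos φ - s) ^ 2 + (sb * Real.sin φ) ^ 2 := by
    unfold Xmm
    linear_combination (-rb ^ 2) * Real.sin_sq_add_cos_sq θ - sb ^ 2 * Real.sin_sq_add_cos_sq φ
  set y : (ℝ × ℝ) × ℝ × ℝ :=
    ((rb * Real.cos θ, rb * Real.sin θ), (sb * Real.cos φ, sb * Real.sin φ)) with hy
  have hd : dist y ((r, 0), (s, 0)) ≤ √(Xmm r s rb sb θ φ) := by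
    simp only [hy, Prod.dist_eq, Real.dist_eq, sub_zero, max_le_iff]
    refine ⟨⟨?_, ?_⟩, ?_, ?_⟩ <;> apply Real.abs_le_sqrt <;> rw [hX'] <;> nlinarith [
      sq_nonneg (rb * Real.cos θ - r), sq_nonneg (rb * Real.sin θ),
      sq_nonneg (sb * Real.cos φ - s), sq_nonneg (sb * Real.sin φ)]
  rcases (dist_nonneg (x := y) (y := ((r, 0), (s, 0)))).eq_or_lt with h0 | hpos
  · have hyz : y = ((r, 0), (s, 0)) := dist_eq_zero.1 h0.symm
    simp only [hy, Prod.mk.injEq] at hyz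
    obtain ⟨⟨h1, h2⟩, h3, h4⟩ := hyz
    have : Xmm r s rb sb θ φ = 0 := by rw [hX', h1, h2, h3, h4]; ring
    simp [this, ← h0]
  · have h3 : Xmm r s rb sb θ φ * √(Xmm r s rb sb θ φ) = √(Xmm r s rb sb θ φ) ^ 3 := by
      rw [pow_succ, Real.sq_sqrt hX]
    rw [h3]
    gcongr

theorem lintegral_lintegral_prod_prod {μ ν : Measure ℝ} [SFinite μ] [SFinite ν]
    {H : (ℝ × ℝ) × ℝ × ℝ → ℝ≥0∞} (hH : Measurable H) :
    ∫⁻ p, ∫⁻ q, H (p, q) ∂μ.prod ν ∂μ.prod ν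
      = ∫⁻ a, ∫⁻ b, ∫⁻ θ, ∫⁻ φ, H ((a, θ), (b, φ)) ∂ν ∂ν ∂μ ∂μ := by
  rw [lintegral_prod _ hH.lintegral_prod_right'.aemeasurable]
  refine lintegral_congr fun a => ?_
  have hm : Measurable fun x : (ℝ × ℝ) × ℝ => H ((a, x.1.1), (x.1.2, x.2)) :=
    hH.comp (by fun_prop)
  refine Eq.trans (lintegral_congr fun θ => ?_)
    (lintegral_lintegral_swap hm.lintegral_prod_right'.aemeasurable)
  exact lintegral_prod _ (hH.comp measurable_prodMk_left).aemeasurable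

theorem lintegral_Fr_mul_le {w : ℝ × ℝ → ℝ} (hw : Measurable w) {r s : ℝ} (hr : 0 ≤ r)
    (hs : 0 ≤ s) :
    ∫⁻ p in quadrant, ENNReal.ofReal (|Fr r s p.1 p.2| * |w p|) ≤ ENNReal.ofReal (2352 * r) *
      ∫⁻ l in Set.Ioi (0 : ℝ), volume {y : (ℝ × ℝ) × ℝ × ℝ |
        l < |w (√(y.1.1 ^ 2 + y.1.2 ^ 2), √(y.2.1 ^ 2 + y.2.2 ^ 2)) /
          √(y.1.1 ^ 2 + y.1.2 ^ 2)|} ^ ((1 : ℝ) / 4) := by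
  set f : (ℝ × ℝ) × ℝ × ℝ → ℝ := fun y => |w (√(y.1.1 ^ 2 + y.1.2 ^ 2),
    √(y.2.1 ^ 2 + y.2.2 ^ 2)) / √(y.1.1 ^ 2 + y.1.2 ^ 2)| with hf
  have hfm : Measurable f := by fun_prop
  set g : (ℝ × ℝ) × ℝ × ℝ → ℝ≥0∞ := fun y =>
    ENNReal.ofReal ((dist y ((r, 0), (s, 0)) ^ 3)⁻¹) * ENNReal.ofReal (f y) with hg
  have hgm : Measurable g := by fun_prop
  set H : (ℝ × ℝ) × ℝ × ℝ → ℝ≥0∞ := fun x =>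
    ENNReal.ofReal x.1.1 * (ENNReal.ofReal x.2.1 *
      g ((x.1.1 * Real.cos x.1.2, x.1.1 * Real.sin x.1.2),
        (x.2.1 * Real.cos x.2.2, x.2.1 * Real.sin x.2.2))) with hH
  have hHm : Measurable H := by fun_prop
  have hsub : Set.Ioi (0 : ℝ) ×ˢ Set.Ioo 0 π ⊆ Set.Ioi (0 : ℝ) ×ˢ Set.Ioo (-π) π :=
    Set.prod_mono_right (Set.Ioo_subset_Ioo_left (by linarith [Real.pi_pos]))
  calc ∫⁻ p in quadrant, ENNReal.ofReal (|Fr r s p.1 p.2| * |w p|)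
      = ∫⁻ p in Set.Ioi (0 : ℝ) ×ˢ Set.Ioi (0 : ℝ),
          ENNReal.ofReal (|Fr r s p.1 p.2| * |w p|) := by
        rw [quadrant, Measure.volume_eq_prod, ← Measure.prod_restrict, ← Measure.prod_restrict,
          restrict_Ioi_eq_restrict_Ici]
    _ ≤ ∫⁻ p in Set.Ioi (0 : ℝ) ×ˢ Set.Ioi (0 : ℝ), ENNReal.ofReal (48 * r) *
          ∫⁻ θ in Set.Ioo 0 π, ∫⁻ φ in Set.Ioo 0 π, H ((p.1, θ), (p.2, φ)) := by
        refine setLIntegral_mono' (measurableSet_Ioi.prod measurableSet_Ioi) ?_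
        rintro ⟨a, b⟩ ⟨ha, hb⟩
        replace ha : 0 < a := ha
        replace hb : 0 < b := hb
        rw [ENNReal.ofReal_mul (abs_nonneg _), ← Real.norm_eq_abs (Fr _ _ _ _),
          ofReal_norm]
        refine (mul_le_mul_left (enorm_Fr_le hr hs ha.le hb.le) _).trans ?_
        rw [← lintegral_mul_const' _ _ ENNReal.ofReal_ne_top,
          ← lintegral_const_mul' _ _ ENNReal.ofReal_ne_top]
        refine lintegral_mono fun θ => ?_
        dsimp only
        rw [← lintegral_mul_const' _ _ ENNReal.ofReal_ne_top,
          ← lintegral_const_mul' _ _ ENNReal.ofReal_ne_top]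
        refine lintegral_mono fun φ => ?_
        have e : ∀ c t : ℝ, 0 < c → √((c * Real.cos t) ^ 2 + (c * Real.sin t) ^ 2) = c := by
          intro c t hc
          rw [show (c * Real.cos t) ^ 2 + (c * Real.sin t) ^ 2 = c ^ 2 by
            linear_combination c ^ 2 * Real.sin_sq_add_cos_sq t, Real.sqrt_sq hc.le]
        simp only [hH, hg, hf, e a θ ha, e b φ hb]
        have hX := Xmm_nonneg hr hs ha.le hb.le θ φ
        have h1 := inv_Xmm_mul_sqrt_le hr hs ha.le hb.le θ φ
        have hd : 0 ≤ (dist ((a * Real.cos θ, a * Real.sin θ), (b * Real.cos φ, b * Real.sin φ))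
            (((r, 0), (s, 0)) : (ℝ × ℝ) × ℝ × ℝ) ^ 3)⁻¹ := by positivity
        rw [← ENNReal.ofReal_mul (by positivity), ← ENNReal.ofReal_mul hd,
          ← ENNReal.ofReal_mul hb.le, ← ENNReal.ofReal_mul ha.le,
          ← ENNReal.ofReal_mul (by positivity)]
        apply ENNReal.ofReal_le_ofReal
        rw [abs_div, abs_of_pos ha]
        generalize (dist (α := (ℝ × ℝ) × ℝ × ℝ) _ _ ^ 3)⁻¹ = D at h1 hd ⊢
        calc _ ≤ 48 * r * (b * D) * |w (a, b)| := by gcongr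
          _ = _ := by field_simp
    _ = ENNReal.ofReal (48 * r) * ∫⁻ p in Set.Ioi (0 : ℝ) ×ˢ Set.Ioo 0 π,
          ∫⁻ q in Set.Ioi (0 : ℝ) ×ˢ Set.Ioo 0 π, H (p, q) := by
        rw [lintegral_const_mul' _ _ ENNReal.ofReal_ne_top]
        simp only [Measure.volume_eq_prod, ← Measure.prod_restrict]
        rw [lintegral_lintegral_prod_prod hHm, lintegral_prod]
        have h1 : Measurable fun x : ((ℝ × ℝ) × ℝ) × ℝ => H ((x.1.1.1, x.1.2), (x.1.1.2, x.2)) :=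
          hHm.comp (by fun_prop)
        exact (h1.lintegral_prod_right').lintegral_prod_right'.aemeasurable
    _ ≤ ENNReal.ofReal (48 * r) * ∫⁻ p in Set.Ioi (0 : ℝ) ×ˢ Set.Ioo (-π) π,
          ∫⁻ q in Set.Ioi (0 : ℝ) ×ˢ Set.Ioo (-π) π, H (p, q) := by
        gcongr
    _ = ENNReal.ofReal (48 * r) * ∫⁻ y, g y := by rw [lintegral_polar_prod hgm]
    _ ≤ ENNReal.ofReal (48 * r) *
          (49 * ∫⁻ l in Set.Ioi (0 : ℝ), volume {y | l < f y} ^ ((1 : ℝ) / 4)) := by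
        gcongr
        exact lintegral_mul_inv_dist_pow_three_le _ hfm fun y => abs_nonneg _
    _ = _ := by
        rw [← mul_assoc, show (49 : ℝ≥0∞) = ENNReal.ofReal 49 by norm_num,
          ← ENNReal.ofReal_mul (by positivity)]
        rw [show 48 * r * 49 = 2352 * r by ring]

theorem lintegral_Fr_mul_le_Lam {w : ℝ × ℝ → ℝ} (hw : Measurable w) {r s : ℝ} (hr : 0 ≤ r)
    (hs : 0 ≤ s) :
    ∫⁻ p in quadrant, ENNReal.ofReal (|Fr r s p.1 p.2| * |w p|)
      ≤ ENNReal.ofReal (2352 * r) * Lam (fun x => w (rx x, sx x) / rx x) := by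
  rw [Lam_eq (by unfold rx sx; fun_prop)]
  exact lintegral_Fr_mul_le hw hr hs

theorem lintegral_Fs_mul_le_Lam {w : ℝ × ℝ → ℝ} (hw : Measurable w) {r s : ℝ} (hr : 0 ≤ r)
    (hs : 0 ≤ s) :
    ∫⁻ p in quadrant, ENNReal.ofReal (|Fs r s p.1 p.2| * |w p|)
      ≤ ENNReal.ofReal (2352 * s) * Lam (fun x => w (rx x, sx x) / sx x) := by
  have hm : Measurable fun x : Fin 4 → ℝ => w (rx x, sx x) / sx x := by unfold rx sx; fun_prop
  have h := lintegral_Fr_mul_le (hw.comp measurable_swap) hs hr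
  have hq : ∫⁻ p in quadrant, ENNReal.ofReal (|Fs r s p.1 p.2| * |w p|)
      = ∫⁻ p in quadrant, ENNReal.ofReal (|Fr s r p.1 p.2| * |(w ∘ Prod.swap) p|) := by
    have hswap : MeasurePreserving (Prod.swap : ℝ × ℝ → ℝ × ℝ) := Measure.measurePreserving_swap
    have := hswap.setLIntegral_comp_preimage_emb MeasurableEquiv.prodComm.measurableEmbedding
      (fun p => ENNReal.ofReal (|Fs r s p.1 p.2| * |w p|)) quadrant
    rw [← this, quadrant, Set.preimage_swap_prod]
    rfl
  rw [hq, Lam_eq hm]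
  refine h.trans (le_of_eq ?_)
  congr 1
  refine lintegral_congr fun l => ?_
  have hswap : MeasurePreserving (Prod.swap : (ℝ × ℝ) × ℝ × ℝ → (ℝ × ℝ) × ℝ × ℝ) :=
    Measure.measurePreserving_swap
  rw [← hswap.measure_preimage (measurableSet_lt measurable_const
    (by fun_prop)).nullMeasurableSet]
  rfl

theorem abs_integral_le_mul_toReal {K w : ℝ × ℝ → ℝ} {c : ℝ} (hc : 0 ≤ c) {L : ℝ≥0∞}
    (hL : L < ⊤) (h : ∫⁻ p in quadrant, ENNReal.ofReal (|K p| * |w p|) ≤ ENNReal.ofReal c * L) :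
    |∫ p in quadrant, K p * w p| ≤ c * L.toReal := by
  have h1 : ‖∫ p in quadrant, K p * w p‖ₑ ≤ ENNReal.ofReal c * L := by
    refine (enorm_integral_le_lintegral_enorm _).trans (le_trans (le_of_eq ?_) h)
    refine lintegral_congr fun p => ?_
    rw [← abs_mul, ← Real.norm_eq_abs, ofReal_norm]
  have h2 := ENNReal.toReal_mono (ENNReal.mul_ne_top ENNReal.ofReal_ne_top hL.ne) h1
  rwa [toReal_enorm, ENNReal.toReal_mul, ENNReal.toReal_ofReal hc, Real.norm_eq_abs] at h2

/-- There is an absolute constant `C > 0` such that for every measurable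
`w : Π → ℝ` and every `(r,s) ∈ Π`, `∫∫_Π |F^r| |w| ≤ C r Λ(W/ρ)` and
`∫∫_Π |F^s| |w| ≤ C s Λ(W/σ)`, where `(W/ρ)(x) = w(r_x,s_x)/r_x` and
`(W/σ)(x) = w(r_x,s_x)/s_x`; in particular, if `Λ(W/ρ) < ∞` and `Λ(W/σ) < ∞`, then
`|u^r[w](r,s)| ≤ C r Λ(W/ρ)` and `|u^s[w](r,s)| ≤ C s Λ(W/σ)`. -/
theorem stmt_10 :
    ∃ C : ℝ, 0 < C ∧
      ∀ (w : ℝ × ℝ → ℝ), Measurable w → ∀ r s : ℝ, 0 ≤ r → 0 ≤ s →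
        (∫⁻ p in quadrant, ENNReal.ofReal (|Fr r s p.1 p.2| * |w p|))
          ≤ ENNReal.ofReal (C * r) * Lam (fun x => w (rx x, sx x) / rx x) ∧
        (∫⁻ p in quadrant, ENNReal.ofReal (|Fs r s p.1 p.2| * |w p|))
          ≤ ENNReal.ofReal (C * s) * Lam (fun x => w (rx x, sx x) / sx x) ∧
        (Lam (fun x => w (rx x, sx x) / rx x) < ⊤ →
          Lam (fun x => w (rx x, sx x) / sx x) < ⊤ →
          |uR w r s| ≤ C * r * (Lam (fun x => w (rx x, sx x) / rx x)).toReal ∧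
          |uS w r s| ≤ C * s * (Lam (fun x => w (rx x, sx x) / sx x)).toReal) := by
  refine ⟨2352, by norm_num, fun w hw r s hr hs => ?_⟩
  have h1 := lintegral_Fr_mul_le_Lam hw hr hs
  have h2 := lintegral_Fs_mul_le_Lam hw hr hs
  refine ⟨h1, h2, fun hL1 hL2 => ⟨?_, abs_integral_le_mul_toReal (by positivity) hL2 h2⟩⟩
  rw [uR, abs_neg]
  exact abs_integral_le_mul_toReal (by positivity) hL1 h1
end
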